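/- arXiv:2502.14663 — 4 statements merged into one kernel-verified Lean document; each statement's English description precedes it below -/
import Mathlib

section
/- Let G be a finite group, n a positive integer, and π : G → GL(ℂⁿ) a unitary representation. Let Ω ⊆ G be a finite sampling set of size m ≥ 1, and suppose the constant C > 0 satisfies: for every y ∈ ℂⁿ and every coordinate index j ∈ {1,…,n}, Σ_{ω∈Ω} |(π(ω)y)_j|² ≤ C·‖y‖₂². For x ∈ ℂⁿ let A_x ∈ ℂ^{m×n} be the matrix whose row indexed by ω ∈ Ω is (1/√m) times the conjugate transpose of π(ω)*x (so (A_x y)_ω = (1/√m)·Σ_j conj((π(ω)*x)_j)·y_j). Then for every s-sparse vector x ∈ ℂⁿ (at most s nonzero entries), the operator norm of A_x from ℓ² to ℓ² satisfies ‖A_x‖_{2→2} ≤ √(s·C/m)·‖x‖₂. -/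
open scoped ComplexConjugate

/-- The ℓ²-norm of a finitely supported complex vector. -/
noncomputable def l2norm {ι : Type*} [Fintype ι] (v : ι → ℂ) : ℝ :=
  Real.sqrt (∑ i, ‖v i‖ ^ 2)

/-- Number of nonzero entries of a vector. -/
noncomputable def sparsity {n : ℕ} (x : Fin n → ℂ) : ℕ :=
  (Set.toFinite (Function.support x)).toFinset.card

/-- The matrix `A_x = (1/√m) · R_Ω (π(g)* x)*_{g∈G}`, whose row indexed by `ω ∈ Ω`
is `(1/√m)` times the conjugate transpose of `π(ω)* x`. -/
noncomputable def Amat {G : Type*} [Group G] [Fintype G] {n : ℕ}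
    (π : G →* Matrix.unitaryGroup (Fin n) ℂ) (Ω : Finset G) (x : Fin n → ℂ) :
    Matrix ↥Ω (Fin n) ℂ :=
  fun ω j =>
    (1 / (Real.sqrt Ω.card : ℂ)) *
      conj ((((π (ω : G) : Matrix (Fin n) (Fin n) ℂ)).conjTranspose.mulVec x) j)

theorem Amat_mulVec_aux {G : Type*} [Group G] [Fintype G] {n : ℕ}
    (π : G →* Matrix.unitaryGroup (Fin n) ℂ) (Ω : Finset G) (x y : Fin n → ℂ) (ω : ↥Ω) :
    (Amat π Ω x).mulVec y ω = (1 / (Real.sqrt Ω.card : ℂ)) *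
      ∑ k, conj (x k) * ((π (ω : G) : Matrix (Fin n) (Fin n) ℂ).mulVec y) k := by
  simp only [Matrix.mulVec, dotProduct, Amat, Matrix.conjTranspose_apply, map_sum, map_mul,
    Finset.mul_sum, Finset.sum_mul]
  rw [Finset.sum_comm]
  refine Finset.sum_congr rfl fun k _ => Finset.sum_congr rfl fun j _ => ?_
  simp only [RCLike.star_def, Complex.conj_conj]
  ring

theorem l2norm_sq_aux {ι : Type*} [Fintype ι] (v : ι → ℂ) :
    l2norm v ^ 2 = ∑ i, ‖v i‖ ^ 2 :=
  Real.sq_sqrt (Finset.sum_nonneg fun _ _ => sq_nonneg _)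

theorem sparse_cs_aux {n : ℕ} (x z : Fin n → ℂ) :
    ‖∑ k, conj (x k) * z k‖ ^ 2 ≤ l2norm x ^ 2 *
      ∑ k ∈ (Set.toFinite (Function.support x)).toFinset, ‖z k‖ ^ 2 := by
  have hsub : ∑ k, conj (x k) * z k =
      ∑ k ∈ (Set.toFinite (Function.support x)).toFinset, conj (x k) * z k := by
    symm
    apply Finset.sum_subset (Finset.subset_univ _)
    intro k _ hk
    have : x k = 0 := by simpa using hk
    simp [this]
  rw [hsub, l2norm_sq_aux]
  calc _ ≤ (∑ k ∈ (Set.toFinite (Function.support x)).toFinset, ‖x k‖ * ‖z k‖) ^ 2 := by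
        gcongr
        refine (norm_sum_le _ _).trans (le_of_eq ?_)
        simp
    _ ≤ _ := Finset.sum_mul_sq_le_sq_mul_sq _ _ _
    _ ≤ _ := by
        gcongr
        exact Finset.subset_univ _

theorem stmt0 {G : Type*} [Group G] [Fintype G] {n m s : ℕ} (hn : 1 ≤ n)
    (π : G →* Matrix.unitaryGroup (Fin n) ℂ) (Ω : Finset G)
    (hm : Ω.card = m) (hm1 : 1 ≤ m)
    (C : ℝ) (hCpos : 0 < C)
    (hC : ∀ (y : Fin n → ℂ) (j : Fin n),
      ∑ ω ∈ Ω, ‖((π ω : Matrix (Fin n) (Fin n) ℂ).mulVec y) j‖ ^ 2 ≤ C * (l2norm y) ^ 2)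
    (x : Fin n → ℂ) (hx : sparsity x ≤ s) :
    ∀ y : Fin n → ℂ,
      l2norm ((Amat π Ω x).mulVec y) ≤ Real.sqrt (s * C / m) * l2norm x * l2norm y := by
  intro y
  have hm0 : (0 : ℝ) < m := by exact_mod_cast hm1
  have hx0 : 0 ≤ l2norm x := Real.sqrt_nonneg _
  have hy0 : 0 ≤ l2norm y := Real.sqrt_nonneg _
  refine (sq_le_sq₀ (Real.sqrt_nonneg _) (by positivity)).mp ?_
  rw [mul_pow, mul_pow, Real.sq_sqrt (show (0 : ℝ) ≤ s * C / m by positivity),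
    Real.sq_sqrt (Finset.sum_nonneg fun _ _ => sq_nonneg _)]
  have hpt : ∀ ω : ↥Ω, ‖(Amat π Ω x).mulVec y ω‖ ^ 2 ≤ (1 / m : ℝ) * (l2norm x ^ 2 *
      ∑ k ∈ (Set.toFinite (Function.support x)).toFinset,
        ‖((π (ω : G) : Matrix (Fin n) (Fin n) ℂ).mulVec y) k‖ ^ 2) := by
    intro ω
    rw [Amat_mulVec_aux, norm_mul, mul_pow, hm]
    have h1 : ‖(1 / (Real.sqrt m : ℂ))‖ ^ 2 = (1 / m : ℝ) := by
      rw [norm_div, norm_one, Complex.norm_real, div_pow, Real.norm_eq_abs, sq_abs,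
        Real.sq_sqrt hm0.le, one_pow]
    rw [h1]
    gcongr
    exact sparse_cs_aux _ _
  have hs : (((Set.toFinite (Function.support x)).toFinset.card : ℕ) : ℝ) ≤ s := by
    exact_mod_cast hx
  calc _ ≤ _ := Finset.sum_le_sum fun ω _ => hpt ω
    _ = (1 / m : ℝ) * (l2norm x ^ 2 * ∑ k ∈ (Set.toFinite (Function.support x)).toFinset,
        ∑ ω ∈ Ω, ‖((π ω : Matrix (Fin n) (Fin n) ℂ).mulVec y) k‖ ^ 2) := by
        rw [← Finset.mul_sum, ← Finset.mul_sum, Finset.sum_comm]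
        congr 2
        refine Finset.sum_congr rfl fun k _ => ?_
        exact Finset.sum_coe_sort Ω
          (fun ω => ‖((π ω : Matrix (Fin n) (Fin n) ℂ).mulVec y) k‖ ^ 2)
    _ ≤ (1 / m : ℝ) * (l2norm x ^ 2 * ∑ k ∈ (Set.toFinite (Function.support x)).toFinset,
        C * l2norm y ^ 2) := by
        gcongr with k _
        exact hC y k
    _ ≤ (1 / m : ℝ) * (l2norm x ^ 2 * (s * (C * l2norm y ^ 2))) := by
        rw [Finset.sum_const, nsmul_eq_mul]
        gcongr
    _ = _ := by ring
end

section
/- Let G be a finite group, n a positive integer, and π : G → GL(ℂⁿ) a unitary representation. Let Ω ⊆ G be a sampling set of size m ≥ 1, and suppose C > 0 satisfies: for every y ∈ ℂⁿ and every coordinate index j, Σ_{ω∈Ω} |(π(ω)y)_j|² ≤ C·‖y‖₂². For x ∈ ℂⁿ let A_x ∈ ℂ^{m×n} be the matrix whose row indexed by ω ∈ Ω is (1/√m) times the conjugate transpose of π(ω)*x. Then for every x ∈ ℂⁿ (not necessarily sparse), ‖A_x‖_{2→2} ≤ √(C/m)·‖x‖₁, where ‖x‖₁ = Σ_j |x_j|.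 Consequently ‖A_x − A_y‖_{2→2} ≤ √(C/m)·‖x−y‖₁ for all x, y ∈ ℂⁿ. -/
open scoped ComplexConjugate

/-- The ℓ¹-norm of a finitely supported complex vector. -/
noncomputable def l1norm {ι : Type*} [Fintype ι] (v : ι → ℂ) : ℝ :=
  ∑ i, ‖v i‖

theorem Amat_mulVec_apply {G : Type*} [Group G] [Fintype G] {n : ℕ}
    (π : G →* Matrix.unitaryGroup (Fin n) ℂ) (Ω : Finset G) (x z : Fin n → ℂ) (ω : ↥Ω) :
    (Amat π Ω x).mulVec z ω = (1 / (Real.sqrt Ω.card : ℂ)) *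
      ∑ k, conj (x k) * ((π (ω : G) : Matrix (Fin n) (Fin n) ℂ).mulVec z) k := by
  simp only [Amat, Matrix.mulVec, dotProduct, Matrix.conjTranspose_apply, map_sum, map_mul,
    Finset.mul_sum, Finset.sum_mul]
  rw [Finset.sum_comm]
  refine Finset.sum_congr rfl fun k _ => Finset.sum_congr rfl fun j _ => ?_
  simp only [RCLike.star_def, Complex.conj_conj]
  ring

theorem Amat_sub {G : Type*} [Group G] [Fintype G] {n : ℕ}
    (π : G →* Matrix.unitaryGroup (Fin n) ℂ) (Ω : Finset G) (x y : Fin n → ℂ) :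
    Amat π Ω x - Amat π Ω y = Amat π Ω (x - y) := by
  ext ω j
  simp only [Amat, Matrix.sub_apply, Matrix.mulVec_sub, Pi.sub_apply, map_sub, mul_sub]

theorem cs_weighted {n : ℕ} (x a : Fin n → ℂ) :
    ‖∑ k, conj (x k) * a k‖ ^ 2 ≤ l1norm x * ∑ k, ‖x k‖ * ‖a k‖ ^ 2 := by
  have h1 : ‖∑ k, conj (x k) * a k‖ ≤ ∑ k, ‖x k‖ * ‖a k‖ := by
    refine (norm_sum_le _ _).trans (le_of_eq ?_)
    simp
  refine (pow_le_pow_left₀ (norm_nonneg _) h1 2).trans ?_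
  refine Finset.sum_sq_le_sum_mul_sum_of_sq_le_mul _ (fun k _ => norm_nonneg _)
    (fun k _ => by positivity) (fun k _ => le_of_eq (by ring))

theorem Amat_bound {G : Type*} [Group G] [Fintype G] {n m : ℕ}
    (π : G →* Matrix.unitaryGroup (Fin n) ℂ) (Ω : Finset G)
    (hm : Ω.card = m) (C : ℝ) (hCpos : 0 < C)
    (hC : ∀ (y : Fin n → ℂ) (j : Fin n),
      ∑ ω ∈ Ω, ‖((π ω : Matrix (Fin n) (Fin n) ℂ).mulVec y) j‖ ^ 2 ≤ C * (l2norm y) ^ 2)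
    (x z : Fin n → ℂ) :
    l2norm ((Amat π Ω x).mulVec z) ≤ Real.sqrt (C / m) * l1norm x * l2norm z := by
  have hx : 0 ≤ l1norm x := Finset.sum_nonneg fun _ _ => norm_nonneg _
  have hz : 0 ≤ l2norm z := Real.sqrt_nonneg _
  refine Real.sqrt_le_iff.mpr ⟨by positivity, ?_⟩
  have hrow : ∀ ω : ↥Ω, ‖(Amat π Ω x).mulVec z ω‖ ^ 2 ≤
      (1 / m : ℝ) * (l1norm x *
        ∑ k, ‖x k‖ * ‖((π (ω : G) : Matrix (Fin n) (Fin n) ℂ).mulVec z) k‖ ^ 2) := by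
    intro ω
    rw [Amat_mulVec_apply, norm_mul, mul_pow, hm]
    have : ‖(1 / (Real.sqrt m : ℂ))‖ ^ 2 = (1 / m : ℝ) := by
      rw [norm_div, norm_one, Complex.norm_real, Real.norm_eq_abs, div_pow, sq_abs,
        Real.sq_sqrt (Nat.cast_nonneg m), one_pow]
    rw [this]
    exact mul_le_mul_of_nonneg_left (cs_weighted _ _) (by positivity)
  calc ∑ ω, ‖(Amat π Ω x).mulVec z ω‖ ^ 2
      ≤ ∑ ω : ↥Ω, (1 / m : ℝ) * (l1norm x *
        ∑ k, ‖x k‖ * ‖((π (ω : G) : Matrix (Fin n) (Fin n) ℂ).mulVec z) k‖ ^ 2) :=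
        Finset.sum_le_sum fun ω _ => hrow ω
    _ = (1 / m : ℝ) * (l1norm x * ∑ k, ‖x k‖ *
        ∑ ω ∈ Ω, ‖((π ω : Matrix (Fin n) (Fin n) ℂ).mulVec z) k‖ ^ 2) := by
        rw [← Finset.mul_sum, ← Finset.mul_sum, Finset.sum_comm]
        congr 2
        refine Finset.sum_congr rfl fun k _ => ?_
        rw [← Finset.mul_sum, ← Finset.sum_coe_sort Ω]
    _ ≤ (1 / m : ℝ) * (l1norm x * ∑ k, ‖x k‖ * (C * (l2norm z) ^ 2)) := by
        gcongr with k _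
        exact hC z k
    _ = (Real.sqrt (C / m) * l1norm x * l2norm z) ^ 2 := by
        rw [← Finset.sum_mul, mul_pow, mul_pow, Real.sq_sqrt (by positivity)]
        change (1 / m : ℝ) * (l1norm x * (l1norm x * _)) = _
        ring

theorem stmt2 {G : Type*} [Group G] [Fintype G] {n m : ℕ} (hn : 1 ≤ n)
    (π : G →* Matrix.unitaryGroup (Fin n) ℂ) (Ω : Finset G)
    (hm : Ω.card = m) (hm1 : 1 ≤ m)
    (C : ℝ) (hCpos : 0 < C)
    (hC : ∀ (y : Fin n → ℂ) (j : Fin n),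
      ∑ ω ∈ Ω, ‖((π ω : Matrix (Fin n) (Fin n) ℂ).mulVec y) j‖ ^ 2 ≤ C * (l2norm y) ^ 2) :
    (∀ x z : Fin n → ℂ,
        l2norm ((Amat π Ω x).mulVec z) ≤ Real.sqrt (C / m) * l1norm x * l2norm z) ∧
      (∀ x y z : Fin n → ℂ,
        l2norm ((Amat π Ω x - Amat π Ω y).mulVec z) ≤
          Real.sqrt (C / m) * l1norm (x - y) * l2norm z) := by
  refine ⟨Amat_bound π Ω hm C hCpos hC, fun x y z => ?_⟩
  rw [Amat_sub]
  exact Amat_bound π Ω hm C hCpos hC (x - y) z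
end

section
/- For positive integers s ≤ n, let D_{s,n} = {x ∈ ℂⁿ : ‖x‖₂ ≤ 1 and x has at most s nonzero entries}. Then D_{s,n} is contained in √s times the convex hull of the finite set {±√2·e₁,…,±√2·e_n, ±√2·i·e₁,…,±√2·i·e_n} ⊆ ℂⁿ, where e₁,…,e_n are the canonical basis vectors and i is the imaginary unit. That is, every x ∈ D_{s,n} can be written as √s times a convex combination of the 4n vectors ±√2·e_j and ±√2·i·e_j. -/
open scoped Pointwise

/-- The set `{±√2·e_j, ±√2·i·e_j : 1 ≤ j ≤ n}` of `4n` vectors in `ℂⁿ`. -/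
noncomputable def Bvec (n : ℕ) : Set (Fin n → ℂ) :=
  {v | ∃ j : Fin n,
    v = (Real.sqrt 2 : ℂ) • (Pi.single j (1 : ℂ) : Fin n → ℂ) ∨
    v = -((Real.sqrt 2 : ℂ) • (Pi.single j (1 : ℂ) : Fin n → ℂ)) ∨
    v = ((Real.sqrt 2 : ℂ) * Complex.I) • (Pi.single j (1 : ℂ) : Fin n → ℂ) ∨
    v = -(((Real.sqrt 2 : ℂ) * Complex.I) • (Pi.single j (1 : ℂ) : Fin n → ℂ))}

theorem sub_convex_sum {E ι : Type*} [AddCommGroup E] [Module ℝ E] [Fintype ι] {K : Set E}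
    (hK : Convex ℝ K) (h0 : (0 : E) ∈ K) (w : ι → ℝ) (z : ι → E) (hw : ∀ i, 0 ≤ w i)
    (hw1 : ∑ i, w i ≤ 1) (hz : ∀ i, z i ∈ K) : ∑ i, w i • z i ∈ K := by
  have := hK.sum_mem (t := (Finset.univ : Finset (Option ι)))
    (w := fun o => o.elim (1 - ∑ i, w i) w) (z := fun o => o.elim 0 z)
    (by rintro (_ | i) _
        · simpa using hw1
        · exact hw i)
    (by simp [Fintype.sum_option])
    (by rintro (_ | i) _
        · exact h0
        · exact hz i)
  simpa [Fintype.sum_option] using this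


theorem abs_re_im (z : ℂ) : |z.re| + |z.im| ≤ √2 * ‖z‖ := by
  apply abs_le_of_sq_le_sq' _ (by positivity) |>.2
  rw [mul_pow, Real.sq_sqrt (by norm_num), Complex.sq_norm, Complex.normSq_apply]
  nlinarith [sq_nonneg (|z.re| - |z.im|), sq_abs z.re, sq_abs z.im]

theorem l1_bound {n s : ℕ} (x : Fin n → ℂ) (hx2 : l2norm x ≤ 1) (hx0 : sparsity x ≤ s) :
    ∑ j, ‖x j‖ ≤ √s := by
  set S := (Set.toFinite (Function.support x)).toFinset with hS
  have h1 : ∑ j, ‖x j‖ = ∑ j ∈ S, ‖x j‖ := by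
    symm
    apply Finset.sum_subset (Finset.subset_univ _)
    intro j _ hj
    simpa [hS] using hj
  have h2 : ∑ j, ‖x j‖ ^ 2 ≤ 1 := by
    unfold l2norm at hx2
    simpa using (Real.sqrt_le_left (by norm_num)).1 hx2
  have h3 : ∑ j ∈ S, ‖x j‖ ^ 2 ≤ 1 :=
    (Finset.sum_le_univ_sum_of_nonneg (fun _ => by positivity)).trans h2
  have hc : (S.card : ℝ) ≤ s := by exact_mod_cast hx0
  rw [h1]
  apply Real.le_sqrt_of_sq_le
  have h4 := sq_sum_le_card_mul_sum_sq (s := S) (f := fun j => ‖x j‖)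
  have : (0:ℝ) ≤ S.card := by positivity
  nlinarith

theorem stmt4 {n s : ℕ} (hn : 1 ≤ n) (hs : 1 ≤ s) (hsn : s ≤ n)
    (x : Fin n → ℂ) (hx2 : l2norm x ≤ 1) (hx0 : sparsity x ≤ s) :
    x ∈ (Real.sqrt s : ℝ) • convexHull ℝ (Bvec n) := by
  have hs0 : (0:ℝ) < √s := Real.sqrt_pos.2 (by exact_mod_cast hs)
  have h20 : (0:ℝ) < √2 := by positivity
  have hK := convex_convexHull ℝ (Bvec n)
  have hB := subset_convexHull ℝ (Bvec n)
  have h0 : (0 : Fin n → ℂ) ∈ convexHull ℝ (Bvec n) := by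
    have a := hB (show (Real.sqrt 2 : ℂ) • (Pi.single ⟨0, hn⟩ (1 : ℂ) : Fin n → ℂ) ∈ Bvec n from
      ⟨_, Or.inl rfl⟩)
    have b := hB (show -((Real.sqrt 2 : ℂ) • (Pi.single ⟨0, hn⟩ (1 : ℂ) : Fin n → ℂ)) ∈ Bvec n from
      ⟨_, Or.inr (Or.inl rfl)⟩)
    have := hK a b (a := 1/2) (b := 1/2) (by norm_num) (by norm_num) (by norm_num)
    rwa [smul_neg, add_neg_cancel] at this
  let w : Fin n ⊕ Fin n → ℝ := Sum.elim (fun j => |(x j).re| / (√2 * √s))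
    (fun j => |(x j).im| / (√2 * √s))
  let u : Fin n → (Fin n → ℂ) := fun j => (Real.sqrt 2 : ℂ) • Pi.single j (1 : ℂ)
  let v : Fin n → (Fin n → ℂ) := fun j => ((Real.sqrt 2 : ℂ) * Complex.I) • Pi.single j (1 : ℂ)
  let z : Fin n ⊕ Fin n → (Fin n → ℂ) := Sum.elim
    (fun j => if 0 ≤ (x j).re then u j else - u j)
    (fun j => if 0 ≤ (x j).im then v j else - v j)
  have hz : ∀ i, z i ∈ convexHull ℝ (Bvec n) := by
    rintro (j | j) <;> apply hB <;> refine ⟨j, ?_⟩ <;> simp only [z, u, v, Sum.elim_inl, Sum.elim_inr] <;>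
      split_ifs <;> simp
  have hw : ∀ i, 0 ≤ w i := by
    rintro (j | j) <;> simp only [w, Sum.elim_inl, Sum.elim_inr] <;> positivity
  have hw1 : ∑ i, w i ≤ 1 := by
    simp only [w, Fintype.sum_sum_type, Sum.elim_inl, Sum.elim_inr]
    rw [← Finset.sum_div, ← Finset.sum_div, ← add_div, div_le_one (by positivity),
      ← Finset.sum_add_distrib]
    calc _ ≤ ∑ j, √2 * ‖x j‖ := Finset.sum_le_sum fun j _ => abs_re_im _
      _ ≤ _ := by
        rw [← Finset.mul_sum]
        exact mul_le_mul_of_nonneg_left (l1_bound x hx2 hx0) h20.le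
  refine ⟨_, sub_convex_sum hK h0 w z hw hw1 hz, ?_⟩
  have e1 : ∀ j, w (Sum.inl j) • z (Sum.inl j) = ((x j).re / (√2 * √s)) • u j := by
    intro j
    simp only [w, z, Sum.elim_inl]
    split_ifs with h
    · rw [abs_of_nonneg h]
    · rw [abs_of_neg (not_le.1 h), neg_div, smul_neg, neg_smul, neg_neg]
  have e2 : ∀ j, w (Sum.inr j) • z (Sum.inr j) = ((x j).im / (√2 * √s)) • v j := by
    intro j
    simp only [w, z, Sum.elim_inr]
    split_ifs with h
    · rw [abs_of_nonneg h]
    · rw [abs_of_neg (not_le.1 h), neg_div, smul_neg, neg_smul, neg_neg]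
  have hs0' : ((√s : ℝ) : ℂ) ≠ 0 := by exact_mod_cast hs0.ne'
  have h20' : ((√2 : ℝ) : ℂ) ≠ 0 := by exact_mod_cast h20.ne'
  simp only [Fintype.sum_sum_type, e1, e2]
  funext k
  simp only [u, v, Pi.smul_apply, Pi.add_apply, Finset.sum_apply, Pi.single_apply, smul_eq_mul,
    Complex.real_smul, mul_ite, mul_one, mul_zero, Finset.sum_ite_eq, Finset.mem_univ, if_true]
  push_cast
  field_simp
  exact Complex.re_add_im (x k)
end

section
/- Let G be a finite group, n a positive integer, π : G → GL(ℂⁿ) a unitary representation, and Ω ⊆ G a sampling set of size m ≥ 1. For x ∈ ℂⁿ let A_x ∈ ℂ^{m×n} be the matrix whose row indexed by ω ∈ Ω is (1/√m) times the conjugate transpose of π(ω)*x. Let D_{s,n} = {x ∈ ℂⁿ : ‖x‖₂ ≤ 1, ‖x‖₀ ≤ s}, 𝒜 = {A_x : x ∈ D_{s,n}}, and B = {A_{±√2·e_j} : 1 ≤ j ≤ n} ∪ {A_{±√2·i·e_j} : 1 ≤ j ≤ n}. Then 𝒜 ⊆ √s·conv(B), i.e. every matrix A_x with x ∈ D_{s,n}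 is √s times a convex combination (with real nonnegative coefficients) of matrices from B. -/
open scoped ComplexConjugate Pointwise

/-- `x ↦ A_x` as a real-linear map. -/
noncomputable def AmatLin {G : Type*} [Group G] [Fintype G] {n : ℕ}
    (π : G →* Matrix.unitaryGroup (Fin n) ℂ) (Ω : Finset G) :
    (Fin n → ℂ) →ₗ[ℝ] Matrix ↥Ω (Fin n) ℂ where
  toFun := Amat π Ω
  map_add' x y := by
    ext ω j
    simp only [Amat, Matrix.mulVec_add, Pi.add_apply, map_add, mul_add, Matrix.add_apply]
  map_smul' r x := by
    ext ω j
    simp only [Amat, Matrix.mulVec_smul, Pi.smul_apply, Matrix.smul_apply, RingHom.id_apply,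
      Complex.real_smul, map_mul, Complex.conj_ofReal]
    ring

lemma sum_abs_le {n s : ℕ} (x : Fin n → ℂ) (h1 : l2norm x ≤ 1) (h2 : sparsity x ≤ s) :
    ∑ j, (|(x j).re| + |(x j).im|) ≤ Real.sqrt 2 * Real.sqrt s := by
  set S := (Set.toFinite (Function.support x)).toFinset with hS
  have hsq : ∑ i, ‖x i‖ ^ 2 ≤ 1 := by
    have := (Real.sqrt_le_left (by norm_num : (0:ℝ) ≤ 1)).mp h1
    simpa using this
  have e : ∑ j, (|(x j).re| + |(x j).im|) = ∑ j ∈ S, (|(x j).re| + |(x j).im|) := by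
    symm
    apply Finset.sum_subset (Finset.subset_univ _)
    intro j _ hj
    have : x j = 0 := by simpa [hS] using hj
    simp [this]
  have hc := sq_sum_le_card_mul_sum_sq (s := S) (f := fun j => |(x j).re| + |(x j).im|)
  have hb : ∑ j ∈ S, (|(x j).re| + |(x j).im|) ^ 2 ≤ 2 := by
    calc _ ≤ ∑ j ∈ S, 2 * ‖x j‖ ^ 2 := by
          apply Finset.sum_le_sum
          intro j _
          rw [Complex.sq_norm, Complex.normSq_apply]
          nlinarith [sq_nonneg (|(x j).re| - |(x j).im|), sq_abs (x j).re, sq_abs (x j).im]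
      _ ≤ ∑ j, 2 * ‖x j‖ ^ 2 :=
          Finset.sum_le_sum_of_subset_of_nonneg (Finset.subset_univ _)
            (fun _ _ _ => by positivity)
      _ ≤ 2 := by rw [← Finset.mul_sum]; linarith
  have hcard : (S.card : ℝ) ≤ s := by exact_mod_cast h2
  rw [e, ← Real.sqrt_mul (by norm_num)]
  apply Real.le_sqrt_of_sq_le
  have h0 : 0 ≤ ∑ j ∈ S, (|(x j).re| + |(x j).im|) ^ 2 := by positivity
  have h3 : (0 : ℝ) ≤ S.card := by positivity
  nlinarith

lemma vec_decomp {n : ℕ} (x : Fin n → ℂ) :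
    x = ∑ j, ((x j).re / Real.sqrt 2) • ((Real.sqrt 2 : ℂ) • (Pi.single j (1 : ℂ) : Fin n → ℂ))
      + ∑ j, ((x j).im / Real.sqrt 2) •
        (((Real.sqrt 2 : ℂ) * Complex.I) • (Pi.single j (1 : ℂ) : Fin n → ℂ)) := by
  have h : (Real.sqrt 2 : ℂ) ≠ 0 := by simp
  ext i
  simp only [Pi.add_apply, Finset.sum_apply, Pi.smul_apply, Pi.single_apply, Complex.real_smul,
    smul_eq_mul, mul_ite, mul_one, mul_zero, Finset.sum_ite_eq, Finset.mem_univ, if_true]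
  push_cast
  field_simp
  exact (Complex.re_add_im (x i)).symm.trans (by ring)

/-- A symmetric convex set absorbs real combinations of its points with total weight `≤ 1`. -/
lemma absconv {E ι : Type*} [AddCommGroup E] [Module ℝ E] [Fintype ι] {K : Set E}
    (hK : Convex ℝ K) (h0 : (0 : E) ∈ K) (c : ι → ℝ) (z : ι → E)
    (hz : ∀ i, z i ∈ K) (hz' : ∀ i, -z i ∈ K) (hc : ∑ i, |c i| ≤ 1) :
    ∑ i, c i • z i ∈ K := by
  have := hK.sum_mem (t := Finset.univ)
    (w := fun o : Option ι => o.elim (1 - ∑ i, |c i|) (fun i => |c i|))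
    (z := fun o : Option ι => o.elim 0 (fun i => if 0 ≤ c i then z i else -z i))
    (by rintro (_ | i) _
        · simpa using hc
        · simp)
    (by simp [Fintype.sum_option])
    (by rintro (_ | i) _
        · simpa using h0
        · simp only [Option.elim]
          split_ifs
          exacts [hz i, hz' i])
  simp only [Fintype.sum_option, Option.elim, smul_zero, zero_add] at this
  convert this using 2 with i
  split_ifs with h
  · rw [abs_of_nonneg h]
  · rw [abs_of_neg (not_le.mp h)]; simp

theorem stmt5 {G : Type*} [Group G] [Fintype G] {n m s : ℕ} (hn : 1 ≤ n)
    (π : G →* Matrix.unitaryGroup (Fin n) ℂ) (Ω : Finset G)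
    (hm : Ω.card = m) (hm1 : 1 ≤ m) (hs : 1 ≤ s) (hsn : s ≤ n)
    (B : Set (Matrix ↥Ω (Fin n) ℂ))
    (hB : B = {A | ∃ j : Fin n,
      A = Amat π Ω ((Real.sqrt 2 : ℂ) • (Pi.single j (1 : ℂ) : Fin n → ℂ)) ∨
      A = Amat π Ω (-((Real.sqrt 2 : ℂ) • (Pi.single j (1 : ℂ) : Fin n → ℂ))) ∨
      A = Amat π Ω (((Real.sqrt 2 : ℂ) * Complex.I) • (Pi.single j (1 : ℂ) : Fin n → ℂ)) ∨
      A = Amat π Ω (-(((Real.sqrt 2 : ℂ) * Complex.I) • (Pi.single j (1 : ℂ) : Fin n → ℂ)))}) :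
    ∀ x : Fin n → ℂ, l2norm x ≤ 1 → sparsity x ≤ s →
      Amat π Ω x ∈ (Real.sqrt s : ℝ) • convexHull ℝ B := by
  intro x h1 h2
  have hs0 : (0 : ℝ) < Real.sqrt s := Real.sqrt_pos.mpr (by exact_mod_cast hs)
  have h20 : (0 : ℝ) < Real.sqrt 2 := Real.sqrt_pos.mpr (by norm_num)
  set L := AmatLin π Ω with hL
  have hLA : ∀ y, Amat π Ω y = L y := fun _ => rfl
  set p : Fin n → (Fin n → ℂ) := fun j => (Real.sqrt 2 : ℂ) • Pi.single j (1 : ℂ) with hp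
  set q : Fin n → (Fin n → ℂ) :=
    fun j => ((Real.sqrt 2 : ℂ) * Complex.I) • Pi.single j (1 : ℂ) with hq
  have m1 : ∀ j, L (p j) ∈ convexHull ℝ B := fun j =>
    subset_convexHull ℝ B (by rw [hB]; exact ⟨j, Or.inl rfl⟩)
  have m2 : ∀ j, -L (p j) ∈ convexHull ℝ B := fun j =>
    subset_convexHull ℝ B (by rw [hB, ← map_neg]; exact ⟨j, Or.inr (Or.inl rfl)⟩)
  have m3 : ∀ j, L (q j) ∈ convexHull ℝ B := fun j =>
    subset_convexHull ℝ B (by rw [hB]; exact ⟨j, Or.inr (Or.inr (Or.inl rfl))⟩)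
  have m4 : ∀ j, -L (q j) ∈ convexHull ℝ B := fun j =>
    subset_convexHull ℝ B (by rw [hB, ← map_neg]; exact ⟨j, Or.inr (Or.inr (Or.inr rfl))⟩)
  have m0 : (0 : Matrix ↥Ω (Fin n) ℂ) ∈ convexHull ℝ B := by
    have := (convex_convexHull ℝ B) (m1 ⟨0, hn⟩) (m2 ⟨0, hn⟩)
      (by norm_num : (0 : ℝ) ≤ 1 / 2) (by norm_num : (0 : ℝ) ≤ 1 / 2) (by norm_num)
    simpa using this
  have key := absconv (convex_convexHull ℝ B) m0
    (Sum.elim (fun j => (x j).re / Real.sqrt 2 / Real.sqrt s)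
      (fun j => (x j).im / Real.sqrt 2 / Real.sqrt s))
    (Sum.elim (fun j => L (p j)) (fun j => L (q j)))
    (by rintro (j | j); exacts [m1 j, m3 j])
    (by rintro (j | j); exacts [m2 j, m4 j])
    (by
      have := sum_abs_le x h1 h2
      rw [Fintype.sum_sum_type]
      simp only [Sum.elim_inl, Sum.elim_inr, abs_div, abs_of_pos hs0, abs_of_pos h20]
      rw [← Finset.sum_add_distrib]
      simp only [← add_div]
      rw [← Finset.sum_div, ← Finset.sum_div, div_div, div_le_one (by positivity)]
      exact this)
  refine ⟨_, key, ?_⟩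
  rw [hLA]
  conv_rhs => rw [vec_decomp x]
  rw [Fintype.sum_sum_type]
  simp only [Sum.elim_inl, Sum.elim_inr, map_add, map_sum, map_smul, smul_add, Finset.smul_sum,
    smul_smul, mul_div_cancel₀ _ hs0.ne', hp, hq]
end
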